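/- For d < min(2,1/β)α, t > 0 and x ≠ x' ∈ ℝ^d, there is c > 0 (depending on t and d only through the volume of a fixed ball) such that ∫_0^t ∫_{ℝ^d} [G_{t-r}(x-y) - G_{t-r}(x'-y)]² dy dr ≥ c |x'-x|² for |x'-x| small. -/

import Mathlib

open MeasureTheory Real Set
open scoped RealInnerProductSpace

/-- The Mittag-Leffler function `E_β(x) = ∑_{k≥0} x^k / Γ(1+βk)`. -/
noncomputable def mittagLeffler (β x : ℝ) : ℝ := ∑' k : ℕ, x ^ k / Real.Gamma (1 + β * k)

/-- Two-parameter Mittag-Leffler function. -/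
noncomputable def mlTwo (β γ x : ℝ) : ℝ := ∑' k : ℕ, x ^ k / Real.Gamma (γ + β * k)

lemma beta_real_int {a b t : ℝ} (ha : 0 < a) (hb : 0 < b) (ht : 0 < t) :
    ∫ s in Ioo (0:ℝ) t, (t - s) ^ (b - 1) * s ^ (a - 1)
      = t ^ (a + b - 1) * (Gamma a * Gamma b / Gamma (a + b)) := by
  have h := Complex.betaIntegral_scaled (a : ℂ) (b : ℂ) ht
  have h2 := Complex.Gamma_mul_Gamma_eq_betaIntegral (s := (a : ℂ)) (t := (b : ℂ))
    (by simpa using ha) (by simpa using hb)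
  have hne : Gamma (a + b) ≠ 0 := (Gamma_pos_of_pos (by linarith)).ne'
  have hB : Complex.betaIntegral a b = ((Gamma a * Gamma b / Gamma (a + b) : ℝ) : ℂ) := by
    rw [← Complex.ofReal_add, Complex.Gamma_ofReal, Complex.Gamma_ofReal, Complex.Gamma_ofReal] at h2
    have hne' : (Gamma (a + b) : ℂ) ≠ 0 := by exact_mod_cast hne
    push_cast
    rw [h2]
    field_simp
  rw [hB, intervalIntegral.integral_of_le ht.le, integral_Ioc_eq_integral_Ioo] at h
  have h3 : ∫ x in Ioo (0:ℝ) t, (x : ℂ) ^ ((a:ℂ) - 1) * ((t : ℂ) - x) ^ ((b:ℂ) - 1)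
      = ∫ x in Ioo (0:ℝ) t, (((t - x) ^ (b - 1) * x ^ (a - 1) : ℝ) : ℂ) := by
    refine setIntegral_congr_fun measurableSet_Ioo fun x hx => ?_
    have h1 : 0 ≤ x := hx.1.le
    have h2 : 0 ≤ t - x := by linarith [hx.2]
    rw [Complex.ofReal_mul, Complex.ofReal_cpow h1, Complex.ofReal_cpow h2]
    push_cast
    ring
  rw [h3, integral_complex_ofReal] at h
  have h4 : ((t : ℂ)) ^ ((a:ℂ) + b - 1) = ((t ^ (a + b - 1) : ℝ) : ℂ) := by
    rw [Complex.ofReal_cpow ht.le]; push_cast; rfl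
  rw [h4] at h
  exact_mod_cast h

lemma beta_real_integrable {a b t : ℝ} (ha : 0 < a) (hb : 0 < b) (ht : 0 < t) :
    IntegrableOn (fun s => (t - s) ^ (b - 1) * s ^ (a - 1)) (Ioo (0:ℝ) t) := by
  by_contra hc
  have h := beta_real_int ha hb ht
  rw [integral_undef hc] at h
  have h1 := Gamma_pos_of_pos ha
  have h2 := Gamma_pos_of_pos hb
  have h3 : 0 < Gamma (a + b) := Gamma_pos_of_pos (by linarith)
  have : 0 < t ^ (a + b - 1) * (Gamma a * Gamma b / Gamma (a + b)) := by positivity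
  linarith

lemma gamma_lb {A y : ℝ} (hA : 0 < A) (hy : 1 ≤ y) : A ^ (y - 1) * exp (-A) ≤ Gamma y := by
  have hi := Real.GammaIntegral_convergent (s := y) (by linarith)
  rw [Real.Gamma_eq_integral (by linarith)]
  have hsub : Ioi A ⊆ Ioi (0:ℝ) := Ioi_subset_Ioi hA.le
  calc A ^ (y - 1) * exp (-A) = ∫ x in Ioi A, A ^ (y - 1) * exp (-x) := by
        rw [integral_const_mul, integral_exp_neg_Ioi]
    _ ≤ ∫ x in Ioi A, exp (-x) * x ^ (y - 1) := by
        refine setIntegral_mono_on ?_ (hi.mono_set hsub) measurableSet_Ioi ?_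
        · exact (integrableOn_exp_neg_Ioi A).const_mul _
        · intro x hx
          rw [mul_comm]
          have : A ^ (y - 1) ≤ x ^ (y - 1) := rpow_le_rpow hA.le (le_of_lt hx) (by linarith)
          gcongr
    _ ≤ _ := by
        refine setIntegral_mono_set hi ?_ (ae_of_all _ hsub)
        refine (ae_restrict_iff' measurableSet_Ioi).2 (ae_of_all _ fun x hx => ?_)
        have : (0:ℝ) < x := hx
        simp only [Pi.zero_apply]
        positivity

lemma ml_summable {β γ R : ℝ} (hβ : 0 < β) (hγ : 0 < γ) (hR : 0 ≤ R) :
    Summable fun k : ℕ => R ^ k / Gamma (γ + β * k) := by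
  set A : ℝ := (2 * (R + 1)) ^ (1 / β) with hA
  have hb1 : (1:ℝ) ≤ 2 * (R + 1) := by linarith
  have hA1 : 1 ≤ A := one_le_rpow hb1 (by positivity)
  have hAb : A ^ β = 2 * (R + 1) := by
    rw [hA, ← rpow_mul (by linarith)]; field_simp; simp
  have hs : Summable fun k : ℕ => (γ + β * k) * exp A * (1/2 : ℝ) ^ k := by
    have h0 : Summable fun k : ℕ => (1/2 : ℝ) ^ k := summable_geometric_two
    have h1 := summable_pow_mul_geometric_of_norm_lt_one 1 (r := (1/2:ℝ)) (by norm_num)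
    refine ((h0.mul_left (γ * exp A)).add (h1.mul_left (β * exp A))).congr fun k => ?_
    simp only [pow_one]; ring
  refine Summable.of_nonneg_of_le (fun k => ?_) (fun k => ?_) hs
  · have : 0 < Gamma (γ + β * k) := Gamma_pos_of_pos (by positivity)
    positivity
  · have hy : 0 < γ + β * k := by positivity
    have hG : Gamma (γ + β * k + 1) = (γ + β * k) * Gamma (γ + β * k) := Gamma_add_one hy.ne'
    have hGp : 0 < Gamma (γ + β * k) := Gamma_pos_of_pos hy
    have hl := gamma_lb (A := A) (y := γ + β * k + 1) (by linarith) (by linarith)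
    rw [add_sub_cancel_right, hG] at hl
    have h2 : (2 * (R + 1)) ^ k ≤ A ^ (γ + β * k) := by
      rw [← hAb, ← rpow_natCast, ← rpow_mul (by linarith)]
      exact rpow_le_rpow_of_exponent_le hA1 (by linarith)
    have h3 : (2 * (R + 1)) ^ k * exp (-A) ≤ (γ + β * k) * Gamma (γ + β * k) :=
      le_trans (by gcongr) hl
    have h4 : (2 * R) ^ k ≤ (2 * (R + 1)) ^ k := by gcongr; linarith
    rw [div_le_iff₀ hGp]
    have h5 : (2 * R) ^ k * exp (-A) ≤ (γ + β * k) * Gamma (γ + β * k) :=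
      le_trans (by gcongr) h3
    have h6 : (2 * R) ^ k ≤ (γ + β * k) * Gamma (γ + β * k) * exp A := by
      have := mul_le_mul_of_nonneg_right h5 (exp_pos A).le
      rwa [mul_assoc, ← exp_add, neg_add_cancel, exp_zero, mul_one] at this
    have h7 : R ^ k = (2 * R) ^ k * (1/2) ^ k := by rw [← mul_pow]; congr 1; ring
    rw [h7]
    calc (2 * R) ^ k * (1/2) ^ k ≤ ((γ + β * k) * Gamma (γ + β * k) * exp A) * (1/2) ^ k := by
          gcongr
      _ = _ := by ring

lemma ml_norm_le {β γ R x : ℝ} (hβ : 0 < β) (hγ : 0 < γ) (hx : |x| ≤ R) (k : ℕ) :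
    ‖x ^ k / Gamma (γ + β * k)‖ ≤ R ^ k / Gamma (γ + β * k) := by
  have : 0 < Gamma (γ + β * k) := Gamma_pos_of_pos (by positivity)
  rw [norm_div, norm_pow, Real.norm_eq_abs, Real.norm_eq_abs, abs_of_pos this]
  gcongr

lemma ml_summable' {β γ : ℝ} (x : ℝ) (hβ : 0 < β) (hγ : 0 < γ) :
    Summable fun k : ℕ => x ^ k / Gamma (γ + β * k) :=
  Summable.of_norm_bounded (ml_summable hβ hγ (abs_nonneg x)) (ml_norm_le hβ hγ le_rfl)

lemma ml_continuous {β γ : ℝ} (hβ : 0 < β) (hγ : 0 < γ) : Continuous (mlTwo β γ) := by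
  rw [continuous_iff_continuousAt]
  intro x
  have : ContinuousOn (mlTwo β γ) (Icc (-(|x| + 1)) (|x| + 1)) := by
    unfold mlTwo
    refine continuousOn_tsum (fun k => by fun_prop)
      (ml_summable hβ hγ (R := |x| + 1) (by positivity)) ?_
    intro k y hy
    exact ml_norm_le hβ hγ (abs_le.2 hy) k
  refine this.continuousAt (Icc_mem_nhds ?_ ?_)
  · linarith [neg_abs_le x]
  · linarith [le_abs_self x]

lemma ml_rec {β γ : ℝ} (x : ℝ) (hβ : 0 < β) (hγ : 0 < γ) :
    mlTwo β γ x = 1 / Gamma γ + x * mlTwo β (γ + β) x := by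
  unfold mlTwo
  rw [(ml_summable' x hβ hγ).tsum_eq_zero_add, ← tsum_mul_left]
  congr 1
  · simp
  · refine tsum_congr fun k => ?_
    rw [pow_succ]
    push_cast
    rw [show γ + β * ((k:ℝ) + 1) = γ + β + β * k by ring]
    ring

lemma ml_conv_integrable {β γ μ t : ℝ} (hβ : 0 < β) (hγ : 0 < γ) (hμ : 0 < μ) (ht : 0 < t) :
    IntegrableOn (fun s => (t - s) ^ (μ - 1) * (s ^ (γ - 1) * mlTwo β γ (-s ^ β)))
      (Ioo (0:ℝ) t) := by
  have h1 := beta_real_integrable hγ hμ ht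
  have hc : Continuous fun s : ℝ => mlTwo β γ (-s ^ β) :=
    (ml_continuous hβ hγ).comp ((continuous_rpow_const hβ.le).neg)
  obtain ⟨C, hC⟩ := (isCompact_Icc (a := (0:ℝ)) (b := t)).exists_bound_of_continuousOn
    hc.continuousOn
  have h2 : IntegrableOn (fun s => ((t - s) ^ (μ - 1) * s ^ (γ - 1)) * mlTwo β γ (-s ^ β))
      (Ioo (0:ℝ) t) := by
    refine Integrable.mul_bdd (c := C) h1 hc.aestronglyMeasurable ?_
    refine (ae_restrict_iff' measurableSet_Ioo).2 (ae_of_all _ fun x hx => ?_)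
    exact hC x ⟨hx.1.le, hx.2.le⟩
  refine h2.congr (ae_of_all _ fun s => ?_)
  simp only; ring

lemma ml_conv {β γ μ t : ℝ} (hβ : 0 < β) (hγ : 0 < γ) (hμ : 0 < μ) (ht : 0 < t) :
    ∫ s in Ioo (0:ℝ) t, (t - s) ^ (μ - 1) * (s ^ (γ - 1) * mlTwo β γ (-s ^ β))
      = Gamma μ * t ^ (γ + μ - 1) * mlTwo β (γ + μ) (-t ^ β) := by
  set F : ℕ → ℝ → ℝ := fun k s =>
    ((-1) ^ k / Gamma (γ + β * k)) * ((t - s) ^ (μ - 1) * s ^ ((γ + β * k) - 1)) with hF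
  have hpos : ∀ k : ℕ, 0 < γ + β * k := fun k => by positivity
  have hGp : ∀ k : ℕ, 0 < Gamma (γ + β * k) := fun k => Gamma_pos_of_pos (hpos k)
  have hFi : ∀ k, Integrable (F k) (volume.restrict (Ioo (0:ℝ) t)) := fun k =>
    (beta_real_integrable (hpos k) hμ ht).const_mul _
  have htk : ∀ k : ℕ, t ^ (γ + β * k + μ - 1) = t ^ (γ + μ - 1) * (t ^ β) ^ k := fun k => by
    rw [← rpow_natCast, ← rpow_mul ht.le, ← rpow_add ht]; congr 1; ring
  have hFint : ∀ k, ∫ s in Ioo (0:ℝ) t, F k s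
      = Gamma μ * t ^ (γ + μ - 1) * ((-t ^ β) ^ k / Gamma (γ + μ + β * k)) := fun k => by
    simp only [hF]
    rw [integral_const_mul, beta_real_int (hpos k) hμ ht, htk k, neg_pow (t ^ β),
      show γ + β * (k:ℝ) + μ = γ + μ + β * k by ring]
    have := (hGp k).ne'
    field_simp
  have hFn : ∀ k, ∫ s in Ioo (0:ℝ) t, ‖F k s‖
      = Gamma μ * t ^ (γ + μ - 1) * ((t ^ β) ^ k / Gamma (γ + μ + β * k)) := fun k => by
    have : ∫ s in Ioo (0:ℝ) t, ‖F k s‖ = ∫ s in Ioo (0:ℝ) t,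
        (1 / Gamma (γ + β * k)) * ((t - s) ^ (μ - 1) * s ^ ((γ + β * k) - 1)) := by
      refine setIntegral_congr_fun measurableSet_Ioo fun s hs => ?_
      have h1 : 0 < s := hs.1
      have h2 : 0 < t - s := by linarith [hs.2]
      have h3 : 0 ≤ (t - s) ^ (μ - 1) * s ^ ((γ + β * k) - 1) := by positivity
      simp only [hF]
      rw [norm_mul, Real.norm_of_nonneg h3, norm_div, norm_pow, norm_neg, norm_one, one_pow,
        Real.norm_of_nonneg (hGp k).le]
    rw [this, integral_const_mul, beta_real_int (hpos k) hμ ht, htk k,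
      show γ + β * (k:ℝ) + μ = γ + μ + β * k by ring]
    have := (hGp k).ne'
    field_simp
  have hsum : Summable fun k => ∫ s in Ioo (0:ℝ) t, ‖F k s‖ := by
    simp_rw [hFn]
    exact (ml_summable hβ (by positivity) (by positivity)).mul_left _
  have key := hasSum_integral_of_summable_integral_norm hFi hsum
  have h1 : ∫ s in Ioo (0:ℝ) t, (t - s) ^ (μ - 1) * (s ^ (γ - 1) * mlTwo β γ (-s ^ β))
      = ∫ s in Ioo (0:ℝ) t, ∑' k, F k s := by
    refine setIntegral_congr_fun measurableSet_Ioo fun s hs => ?_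
    have h1 : 0 < s := hs.1
    simp only [hF, mlTwo]
    rw [← mul_assoc, ← tsum_mul_left]
    refine tsum_congr fun k => ?_
    rw [show γ + β * (k:ℝ) - 1 = (γ - 1) + β * k by ring, rpow_add h1, rpow_mul h1.le, rpow_natCast,
      neg_pow (s ^ β)]
    ring
  rw [h1, ← key.tsum_eq]
  simp_rw [hFint]
  rw [tsum_mul_left]
  rfl

lemma volterra_pos {β c : ℝ} (hβ0 : 0 < β) (hβ1 : β < 1) (hc : 0 < c) {w f : ℝ → ℝ}
    (hw : ContinuousOn w (Ioi 0))
    (hf : ∀ t1 t0, 0 < t1 → t1 < t0 → (t1 / t0) ^ (1 - β) * f t1 ≤ f t0)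
    (hi : ∀ t, 0 < t → IntegrableOn (fun s => (t - s) ^ (β - 1) * w s) (Ioo 0 t))
    (he : ∀ t, 0 < t → w t = f t - c * ∫ s in Ioo 0 t, (t - s) ^ (β - 1) * w s)
    {ε : ℝ} (hε : 0 < ε) (hwε : ∀ t, 0 < t → t < ε → 0 < w t) :
    ∀ t, 0 < t → 0 < w t := by
  intro T hT
  by_contra hneg
  push Not at hneg
  -- the first zero
  set S : Set ℝ := Icc (ε / 2) T ∩ w ⁻¹' Iic 0 with hS
  have hSc : IsCompact S := by
    have : IsClosed S := by
      refine ContinuousOn.preimage_isClosed_of_isClosed (hw.mono ?_) isClosed_Icc isClosed_Iic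
      intro x hx; exact lt_of_lt_of_le (by positivity) hx.1
    exact isCompact_Icc.of_isClosed_subset this inter_subset_left
  have hTε : ε ≤ T := by
    by_contra h; push Not at h; linarith [hwε T hT h]
  obtain ⟨t0, ht0S, ht0min⟩ := hSc.exists_isLeast ⟨T, ⟨by linarith, le_rfl⟩, hneg⟩
  have ht0 : 0 < t0 := lt_of_lt_of_le (by positivity) ht0S.1.1
  have hw0 : w t0 ≤ 0 := ht0S.2
  have hpos : ∀ s, 0 < s → s < t0 → 0 < w s := by
    intro s hs hs0
    by_cases h : s < ε
    · exact hwε s hs h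
    · by_contra hcon
      have : s ∈ S := ⟨⟨by linarith, by linarith [ht0S.1.2]⟩, by simpa using hcon⟩
      linarith [ht0min this]
  -- choose h
  set h : ℝ := min (t0 / 2) ((β / (4 * c)) ^ (1 / β)) with hh
  have hhpos : 0 < h := by positivity
  have hh1 : h ≤ t0 / 2 := min_le_left _ _
  have hh2 : h ^ β ≤ β / (4 * c) := by
    calc h ^ β ≤ ((β / (4 * c)) ^ (1 / β)) ^ β := by
          gcongr; exact min_le_right _ _
      _ = β / (4 * c) := by
          rw [← rpow_mul (by positivity), one_div_mul_cancel hβ0.ne', rpow_one]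
  obtain ⟨t1, ht1, hmax⟩ := (isCompact_Icc (a := t0 - h) (b := t0)).exists_isMaxOn
    ⟨t0, by constructor <;> linarith⟩
    (hw.mono (fun x hx => show (0:ℝ) < x by linarith [hx.1]))
  have ht1pos : 0 < t1 := by linarith [ht1.1]
  have hM : 0 < w t1 := by
    have h1 : w (t0 - h) ≤ w t1 := hmax (by constructor <;> linarith)
    linarith [hpos (t0 - h) (by linarith) (by linarith)]
  have ht10 : t1 < t0 := by
    rcases lt_or_eq_of_le ht1.2 with h | h
    · exact h
    · rw [h] at hM; linarith
  set q : ℝ := (t1 / t0) ^ (1 - β) with hq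
  have hq2 : 1 / 2 ≤ q := by
    have h1 : 1 / 2 ≤ t1 / t0 := by
      rw [le_div_iff₀ ht0]; linarith [ht1.1]
    have h2 : t1 / t0 ≤ 1 := by rw [div_le_one ht0]; exact ht10.le
    calc 1 / 2 ≤ t1 / t0 := h1
      _ = (t1 / t0) ^ (1:ℝ) := (rpow_one _).symm
      _ ≤ q := rpow_le_rpow_of_exponent_ge (by positivity) h2 (by linarith)
  -- split integral
  have hsplit : ∫ s in Ioo 0 t0, (t0 - s) ^ (β - 1) * w s
      = (∫ s in Ioo 0 t1, (t0 - s) ^ (β - 1) * w s)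
        + ∫ s in Ico t1 t0, (t0 - s) ^ (β - 1) * w s := by
    rw [← Ioo_union_Ico_eq_Ioo ht1pos ht10.le]
    refine setIntegral_union ?_ measurableSet_Ico ((hi t0 ht0).mono_set ?_)
      ((hi t0 ht0).mono_set ?_)
    · rw [Set.disjoint_left]; rintro x ⟨_, h1⟩ ⟨h2, _⟩; linarith
    · exact Ioo_subset_Ioo_right ht10.le
    · exact fun x hx => ⟨by linarith [hx.1], hx.2⟩
  have hA : ∫ s in Ioo 0 t1, (t0 - s) ^ (β - 1) * w s
      ≤ q * ∫ s in Ioo 0 t1, (t1 - s) ^ (β - 1) * w s := by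
    rw [← integral_const_mul]
    refine setIntegral_mono_on ((hi t0 ht0).mono_set (Ioo_subset_Ioo_right ht10.le))
      ((hi t1 ht1pos).const_mul q) measurableSet_Ioo ?_
    intro s hs
    have hws := hpos s hs.1 (hs.2.trans ht10)
    have h1 : 0 < t1 - s := by linarith [hs.2]
    have h2 : 0 < t0 - s := by linarith [hs.2]
    rw [← mul_assoc]
    refine mul_le_mul_of_nonneg_right ?_ hws.le
    have e1 : (t0 - s) ^ (β - 1) = ((t1 - s) / (t0 - s)) ^ (1 - β) * (t1 - s) ^ (β - 1) := by
      rw [div_rpow h1.le h2.le, show β - 1 = -(1 - β) by ring, rpow_neg h1.le, rpow_neg h2.le]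
      have := (rpow_pos_of_pos h1 (1 - β)).ne'
      field_simp
    rw [e1]
    refine mul_le_mul_of_nonneg_right ?_ (by positivity)
    refine rpow_le_rpow (by positivity) ?_ (by linarith)
    rw [div_le_div_iff₀ h2 ht0]
    nlinarith [hs.1]
  have hIk : ∀ {T : ℝ}, 0 < T → IntegrableOn (fun s => (T - s) ^ (β - 1)) (Ioo 0 T) := by
    intro T hT
    have := beta_real_integrable (a := 1) one_pos hβ0 hT
    simpa using this
  have hkint : ∫ s in Ico t1 t0, (t0 - s) ^ (β - 1) = (t0 - t1) ^ β / β := by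
    rw [integral_Ico_eq_integral_Ioo, ← integral_Ioc_eq_integral_Ioo,
      ← intervalIntegral.integral_of_le ht10.le,
      intervalIntegral.integral_comp_sub_left (fun x => x ^ (β - 1)) t0, sub_self,
      integral_rpow (Or.inl (by linarith))]
    simp [hβ0.ne']
  have hB : ∫ s in Ico t1 t0, (t0 - s) ^ (β - 1) * w s ≤ w t1 * ((t0 - t1) ^ β / β) := by
    rw [← hkint, ← integral_const_mul]
    have hsub : Ico t1 t0 ⊆ Ioo 0 t0 := fun x hx => ⟨by linarith [hx.1], hx.2⟩
    refine setIntegral_mono_on ((hi t0 ht0).mono_set hsub)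
      (((hIk ht0).mono_set hsub).const_mul _) measurableSet_Ico ?_
    intro s hs
    have h1 : w s ≤ w t1 := hmax ⟨by linarith [hs.1, ht1.1], hs.2.le⟩
    have h2 : 0 < t0 - s := by linarith [hs.2]
    rw [mul_comm]
    exact mul_le_mul_of_nonneg_right h1 (by positivity)
  have hC : (t0 - t1) ^ β ≤ β / (4 * c) :=
    le_trans (rpow_le_rpow (by linarith) (by linarith [ht1.1]) hβ0.le) hh2
  have hC' : c * ((t0 - t1) ^ β / β) ≤ 1 / 4 := by
    rw [le_div_iff₀ (by positivity)] at hC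
    rw [← mul_div_assoc, div_le_iff₀ hβ0]
    linarith
  have e0 := he t0 ht0
  have e1 := he t1 ht1pos
  have hff := hf t1 t0 ht1pos ht10
  rw [hsplit] at e0
  set I1 := ∫ s in Ioo 0 t1, (t1 - s) ^ (β - 1) * w s
  have a1 := mul_le_mul_of_nonneg_left hA hc.le
  have a2 := mul_le_mul_of_nonneg_left hB hc.le
  have a3 := mul_le_mul_of_nonneg_left hC' hM.le
  have a4 := mul_le_mul_of_nonneg_right hq2 hM.le
  have a5 : q * w t1 = q * f t1 - q * (c * I1) := by rw [e1]; ring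
  nlinarith

lemma mlu_cont {β : ℝ} (hβ : 0 < β) {γ : ℝ} (hγ : 0 < γ) :
    Continuous fun t : ℝ => mlTwo β γ (-t ^ β) :=
  (ml_continuous hβ hγ).comp ((continuous_rpow_const hβ.le).neg)

lemma mlTwo_zero (β γ : ℝ) : mlTwo β γ 0 = 1 / Gamma γ := by
  unfold mlTwo
  rw [tsum_eq_single 0]
  · simp
  · intro k hk; simp [hk]

lemma mlu_near {β : ℝ} (hβ : 0 < β) {γ : ℝ} (hγ : 0 < γ) :
    ∃ ε > 0, ∀ t, 0 < t → t < ε → 0 < mlTwo β γ (-t ^ β) := by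
  have h := (mlu_cont hβ hγ).tendsto 0
  simp only [zero_rpow hβ.ne', neg_zero, mlTwo_zero] at h
  have h2 := h.eventually (lt_mem_nhds (show 0 < 1 / Gamma γ by
    have := Gamma_pos_of_pos hγ; positivity))
  obtain ⟨ε, hε, H⟩ := Metric.eventually_nhds_iff.1 h2
  refine ⟨ε, hε, fun t h1 h3 => H ?_⟩
  rw [dist_zero_right, norm_of_nonneg h1.le]; exact h3

lemma mlu_eq {β t : ℝ} (hβ0 : 0 < β) (ht : 0 < t) :
    mlTwo β 1 (-t ^ β) = 1 - (1 / Gamma β) *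
      ∫ s in Ioo 0 t, (t - s) ^ (β - 1) * mlTwo β 1 (-s ^ β) := by
  have h := ml_conv hβ0 one_pos hβ0 ht
  simp only [sub_self, rpow_zero, one_mul] at h
  rw [h, ml_rec _ hβ0 one_pos, add_sub_cancel_left]
  have := (Gamma_pos_of_pos hβ0).ne'
  simp only [Gamma_one]
  field_simp
  ring

lemma mlu_int {β t : ℝ} (hβ0 : 0 < β) (ht : 0 < t) :
    IntegrableOn (fun s => (t - s) ^ (β - 1) * mlTwo β 1 (-s ^ β)) (Ioo 0 t) := by
  have h := ml_conv_integrable hβ0 one_pos hβ0 ht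
  simpa only [sub_self, rpow_zero, one_mul] using h

lemma mlu_pos {β : ℝ} (hβ0 : 0 < β) (hβ1 : β < 1) :
    ∀ t, 0 < t → 0 < mlTwo β 1 (-t ^ β) := by
  have hG := Gamma_pos_of_pos hβ0
  obtain ⟨ε, hε, H⟩ := mlu_near hβ0 one_pos
  refine volterra_pos hβ0 hβ1 (c := 1 / Gamma β) (by positivity) (f := fun _ => 1)
    (mlu_cont hβ0 one_pos).continuousOn ?_ (fun t ht => mlu_int hβ0 ht)
    (fun t ht => mlu_eq hβ0 ht) hε H
  intro t1 t0 h1 h0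
  rw [mul_one]
  refine rpow_le_one (div_nonneg h1.le (h1.trans h0).le) ?_ (by linarith)
  rw [div_le_one (h1.trans h0)]; exact h0.le

lemma mlv_pos {β : ℝ} (hβ0 : 0 < β) (hβ1 : β < 1) :
    ∀ t, 0 < t → 0 < t ^ (β - 1) * mlTwo β β (-t ^ β) := by
  have hG := Gamma_pos_of_pos hβ0
  obtain ⟨ε, hε, H⟩ := mlu_near hβ0 hβ0
  refine volterra_pos hβ0 hβ1 (c := 1 / Gamma β) (by positivity)
    (f := fun t => t ^ (β - 1) / Gamma β) (w := fun t => t ^ (β - 1) * mlTwo β β (-t ^ β))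
    ?_ ?_ (fun t ht => ml_conv_integrable hβ0 hβ0 hβ0 ht) ?_ hε ?_
  · refine ContinuousOn.mul ?_ (mlu_cont hβ0 hβ0).continuousOn
    exact fun x hx => (continuousAt_rpow_const x _ (Or.inl (ne_of_gt hx))).continuousWithinAt
  · intro t1 t0 h1 h0
    have h0' := h1.trans h0
    refine le_of_eq ?_
    rw [div_rpow h1.le h0'.le, show β - 1 = -(1 - β) by ring, rpow_neg h1.le, rpow_neg h0'.le]
    have := (rpow_pos_of_pos h1 (1 - β)).ne'
    field_simp
  · intro t ht
    rw [ml_conv hβ0 hβ0 hβ0 ht, ml_rec _ hβ0 hβ0,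
      show β + β - 1 = (β - 1) + β by ring, rpow_add ht]
    field_simp
    ring
  · intro t h1 h2
    have := H t h1 h2
    positivity

lemma mlu_one_sub {β t : ℝ} (hβ0 : 0 < β) (ht : 0 < t) :
    mlTwo β 1 (-t ^ β) = 1 - ∫ s in Ioo 0 t, s ^ (β - 1) * mlTwo β β (-s ^ β) := by
  have h := ml_conv hβ0 hβ0 one_pos ht
  simp only [sub_self, rpow_zero, one_mul, Gamma_one, add_sub_cancel_right] at h
  rw [h, ml_rec _ hβ0 one_pos, add_comm β 1]
  simp only [Gamma_one]
  ring

lemma mlu_anti {β s t : ℝ} (hβ0 : 0 < β) (hβ1 : β < 1) (hs : 0 < s) (hst : s ≤ t) :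
    mlTwo β 1 (-t ^ β) ≤ mlTwo β 1 (-s ^ β) := by
  have ht := hs.trans_le hst
  rw [mlu_one_sub hβ0 hs, mlu_one_sub hβ0 ht]
  have hi := ml_conv_integrable hβ0 hβ0 one_pos ht
  simp only [sub_self, rpow_zero, one_mul] at hi
  refine sub_le_sub_left (setIntegral_mono_set hi ?_ (ae_of_all _ (Ioo_subset_Ioo_right hst))) _
  refine (ae_restrict_iff' measurableSet_Ioo).2 (ae_of_all _ fun x hx => ?_)
  exact (mlv_pos hβ0 hβ1 x hx.1).le

lemma ml_bounds {β x : ℝ} (hβ0 : 0 < β) (hβ1 : β < 1) (hx : 0 ≤ x) :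
    0 ≤ mittagLeffler β (-x) ∧ mittagLeffler β (-x) ≤ 1 ∧
      x * mittagLeffler β (-x) ≤ Gamma (1 + β) := by
  change 0 ≤ mlTwo β 1 (-x) ∧ mlTwo β 1 (-x) ≤ 1 ∧ x * mlTwo β 1 (-x) ≤ Gamma (1 + β)
  have hGb := Gamma_pos_of_pos hβ0
  have hG1 : 0 < Gamma (1 + β) := Gamma_pos_of_pos (by linarith)
  rcases hx.eq_or_lt with rfl | hx
  · simp [mlTwo_zero, hG1.le]
  set t : ℝ := x ^ (1 / β)
  have ht : 0 < t := by positivity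
  have htx : t ^ β = x := by
    rw [← rpow_mul hx.le]; field_simp; simp
  rw [← htx]
  have hu := mlu_pos hβ0 hβ1 t ht
  have he := mlu_eq hβ0 ht
  have hint : mlTwo β 1 (-t ^ β) * (t ^ β * (Gamma β / Gamma (1 + β))) ≤
      ∫ s in Ioo 0 t, (t - s) ^ (β - 1) * mlTwo β 1 (-s ^ β) := by
    have hb := beta_real_int one_pos hβ0 ht
    have hbi := beta_real_integrable one_pos hβ0 ht
    simp only [sub_self, rpow_zero, mul_one, Gamma_one, one_mul, add_sub_cancel_left] at hb hbi
    rw [← hb, ← integral_const_mul]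
    refine setIntegral_mono_on (hbi.const_mul _) (mlu_int hβ0 ht) measurableSet_Ioo ?_
    intro s hs
    have h2 : 0 < t - s := by linarith [hs.2]
    rw [mul_comm]
    exact mul_le_mul_of_nonneg_left (mlu_anti hβ0 hβ1 hs.1 hs.2.le) (by positivity)
  set J := ∫ s in Ioo 0 t, (t - s) ^ (β - 1) * mlTwo β 1 (-s ^ β)
  have hJ : 0 ≤ J := le_trans (by positivity) hint
  have hJ' : 0 ≤ 1 / Gamma β * J := by positivity
  refine ⟨hu.le, by linarith, ?_⟩
  have h1 : J ≤ Gamma β := by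
    have : 1 / Gamma β * J ≤ 1 := by linarith
    rwa [one_div, inv_mul_le_iff₀ hGb, mul_one] at this
  have h2 := hint.trans h1
  have h3 : mlTwo β 1 (-t ^ β) * (t ^ β * (Gamma β / Gamma (1 + β)))
      = (t ^ β * mlTwo β 1 (-t ^ β)) / Gamma (1 + β) * Gamma β := by ring
  rw [h3] at h2
  have h4 := le_of_mul_le_mul_right (h2.trans_eq (one_mul _).symm) hGb
  rwa [div_le_one hG1] at h4

lemma mittagLeffler_continuous {β : ℝ} (hβ0 : 0 < β) : Continuous (mittagLeffler β) :=
  ml_continuous hβ0 one_pos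

section planch
open FourierTransform SchwartzMap
open scoped ContDiff

lemma l2_norm_sq {V : Type*} [NormedAddCommGroup V] [InnerProductSpace ℝ V]
    [FiniteDimensional ℝ V] [MeasurableSpace V] [BorelSpace V] (f : Lp (α := V) ℂ 2) :
    ‖f‖ ^ 2 = ∫ x, ‖f x‖ ^ 2 := by
  have h : inner ℂ f f = ∫ x, inner ℂ (f x) (f x) := L2.inner_def f f
  have h2 : inner ℂ f f = ((‖f‖ ^ 2 : ℝ) : ℂ) := by
    rw [inner_self_eq_norm_sq_to_K]; push_cast; rfl
  have h3 : ∀ x, inner ℂ (f x) (f x) = ((‖f x‖ ^ 2 : ℝ) : ℂ) := fun x => by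
    rw [inner_self_eq_norm_sq_to_K]; push_cast; rfl
  rw [h2] at h
  simp_rw [h3] at h
  rw [integral_complex_ofReal] at h
  exact_mod_cast h

lemma plancherel_aux {V : Type*} [NormedAddCommGroup V] [InnerProductSpace ℝ V]
    [FiniteDimensional ℝ V] [MeasurableSpace V] [BorelSpace V] {f : V → ℂ}
    (hf : Integrable f) (hg : MemLp (𝓕 f) 2 volume) :
    ∫ x, ‖f x‖ ^ 2 = ∫ w, ‖𝓕 f w‖ ^ 2 := by
  set gL : Lp (α := V) ℂ 2 (volume : Measure V) := hg.toLp (𝓕 f) with hgL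
  set h : Lp (α := V) ℂ 2 (volume : Measure V) := 𝓕⁻ gL with hh
  have hFh : 𝓕 h = gL := fourier_fourierInv_eq gL
  have hae : ∀ᵐ x, f x = h x := by
    refine ae_eq_of_integral_contDiff_smul_eq hf.locallyIntegrable
      ((Lp.memLp h).locallyIntegrable (by norm_num)) ?_
    intro φ hφ hφc
    have hg₁ : HasCompactSupport (Complex.ofRealCLM ∘ φ) := hφc.comp_left rfl
    have hg₂ : ContDiff ℝ ∞ (Complex.ofRealCLM ∘ φ) := by fun_prop
    set Φ : 𝓢(V, ℂ) := hg₁.toSchwartzMap hg₂ with hΦ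
    have hΦa : ∀ x, Φ x = (φ x : ℂ) := fun x => by simp [hΦ]
    set Ψ : 𝓢(V, ℂ) := 𝓕⁻ Φ with hΨ
    have hΨΦ : 𝓕 Ψ = Φ := fourier_fourierInv_eq Φ
    have h1 : ∫ x, φ x • h x = Lp.toTemperedDistribution h Φ := by
      rw [Lp.toTemperedDistribution_apply]
      refine integral_congr_ae (ae_of_all _ fun x => ?_)
      simp [hΦa]
    have h2 : Lp.toTemperedDistribution h Φ = ∫ x, Ψ x • gL x := by
      rw [← hΨΦ, ← TemperedDistribution.fourier_apply, Lp.fourier_toTemperedDistribution_eq, hFh,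
        Lp.toTemperedDistribution_apply]
    have h3 : ∫ x, Ψ x • gL x = ∫ x, 𝓕 f x • Ψ x := by
      refine integral_congr_ae ?_
      filter_upwards [hg.coeFn_toLp] with x hx
      rw [hgL, hx, smul_eq_mul, smul_eq_mul, mul_comm]
    have h4 : ∫ x, 𝓕 f x • Ψ x = ∫ x, f x • (𝓕 Ψ) x := by
      simpa using! VectorFourier.integral_fourierIntegral_smul_eq_flip (L := innerₗ V)
        continuous_fourierChar continuous_inner hf Ψ.integrable
    rw [h1, h2, h3, h4, hΨΦ]
    refine integral_congr_ae (ae_of_all _ fun x => ?_)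
    simp [hΦa, mul_comm]
  have e1 : ∫ x, ‖f x‖ ^ 2 = ‖h‖ ^ 2 := by
    rw [l2_norm_sq]
    refine integral_congr_ae ?_
    filter_upwards [hae] with x hx
    rw [hx]
  have e2 : ‖h‖ = ‖gL‖ := by rw [← hFh, Lp.norm_fourier_eq]
  rw [e1, e2, l2_norm_sq]
  refine integral_congr_ae ?_
  filter_upwards [hg.coeFn_toLp] with x hx
  rw [hgL, hx]

lemma norm_exp_sub_sq (a b : ℝ) :
    ‖Complex.exp (a * Complex.I) - Complex.exp (b * Complex.I)‖ ^ 2 = 2 - 2 * cos (a - b) := by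
  rw [← Complex.normSq_eq_norm_sq, Complex.normSq_apply]
  simp only [Complex.sub_re, Complex.sub_im, Complex.exp_ofReal_mul_I_re,
    Complex.exp_ofReal_mul_I_im]
  rw [cos_sub]
  nlinarith [sin_sq_add_cos_sq a, sin_sq_add_cos_sq b]

variable {V : Type*} [NormedAddCommGroup V] [InnerProductSpace ℝ V]
    [FiniteDimensional ℝ V] [MeasurableSpace V] [BorelSpace V]

lemma fourier_reflect {g m : V → ℝ}
    (hm : ∀ ξ : V, (∫ x, Complex.exp (Complex.I * (⟪ξ, x⟫ : ℝ)) * (g x : ℂ)) = (m ξ : ℂ))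
    (x w : V) :
    𝓕 (fun y => (g (x - y) : ℂ)) w
      = Complex.exp ((-2 * π * ⟪x, w⟫ : ℝ) * Complex.I) * (m ((2 * π) • w) : ℂ) := by
  rw [Real.fourier_eq', ← hm, ← integral_const_mul]
  rw [← integral_sub_left_eq_self _ _ x]
  refine integral_congr_ae (ae_of_all _ fun y => ?_)
  simp only [sub_sub_cancel, smul_eq_mul]
  rw [← mul_assoc, ← Complex.exp_add]
  congr 2
  rw [inner_sub_left, inner_smul_left, real_inner_comm w y]
  simp only [conj_trivial]
  push_cast
  ring

lemma increment_eq {g m : V → ℝ} (hg : Integrable g) (hmc : Continuous m)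
    (hm : ∀ ξ : V, (∫ x, Complex.exp (Complex.I * (⟪ξ, x⟫ : ℝ)) * (g x : ℂ)) = (m ξ : ℂ))
    (hm2 : Integrable fun w => (m ((2 * π) • w)) ^ 2) (x x' : V) :
    ∫ y, (g (x - y) - g (x' - y)) ^ 2
      = ∫ w, (2 - 2 * cos (2 * π * ⟪w, x' - x⟫)) * (m ((2 * π) • w)) ^ 2 := by
  have hi : ∀ x : V, Integrable fun y => (g (x - y) : ℂ) := fun x => (hg.comp_sub_left x).ofReal
  set D : V → ℂ := fun y => (g (x - y) : ℂ) - (g (x' - y) : ℂ) with hD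
  have hDi : Integrable D := (hi x).sub (hi x')
  have hFD : ∀ w, 𝓕 D w = (Complex.exp ((-2 * π * ⟪x, w⟫ : ℝ) * Complex.I)
      - Complex.exp ((-2 * π * ⟪x', w⟫ : ℝ) * Complex.I)) * (m ((2 * π) • w) : ℂ) := by
    intro w
    have : 𝓕 D w = 𝓕 (fun y => (g (x - y) : ℂ)) w - 𝓕 (fun y => (g (x' - y) : ℂ)) w := by
      simp only [Real.fourier_eq, hD, smul_sub]
      exact integral_sub ((Real.fourierIntegral_convergent_iff w).2 (hi x))
        ((Real.fourierIntegral_convergent_iff w).2 (hi x'))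
    rw [this, fourier_reflect hm, fourier_reflect hm, sub_mul]
  have hn : ∀ w, ‖𝓕 D w‖ ^ 2
      = (2 - 2 * cos (2 * π * ⟪w, x' - x⟫)) * (m ((2 * π) • w)) ^ 2 := by
    intro w
    rw [hFD, norm_mul, mul_pow, norm_exp_sub_sq, Complex.norm_real, Real.norm_eq_abs, sq_abs]
    congr 4
    rw [inner_sub_right, real_inner_comm x w, real_inner_comm x' w]
    ring
  have hcont : Continuous fun w : V => (2 - 2 * cos (2 * π * ⟪w, x' - x⟫)) := by fun_prop
  have hmem : MemLp (𝓕 D) 2 := by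
    have hc : Continuous (𝓕 D) := by
      have : 𝓕 D = fun w => (Complex.exp ((-2 * π * ⟪x, w⟫ : ℝ) * Complex.I)
        - Complex.exp ((-2 * π * ⟪x', w⟫ : ℝ) * Complex.I)) * (m ((2 * π) • w) : ℂ) := funext hFD
      rw [this]
      fun_prop
    rw [memLp_two_iff_integrable_sq_norm hc.aestronglyMeasurable]
    simp_rw [hn]
    refine Integrable.bdd_mul (c := 4) hm2 hcont.aestronglyMeasurable (ae_of_all _ fun w => ?_)
    have h1 := neg_one_le_cos (2 * π * ⟪w, x' - x⟫)
    have h2 := cos_le_one (2 * π * ⟪w, x' - x⟫)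
    rw [Real.norm_eq_abs, abs_le]; constructor <;> linarith
  have := plancherel_aux hDi hmem
  simp_rw [hn] at this
  rw [← this]
  refine integral_congr_ae (ae_of_all _ fun y => ?_)
  simp only [hD]
  rw [← Complex.ofReal_sub, Complex.norm_real, Real.norm_eq_abs, sq_abs]

end planch

lemma ml_sq_integrable {d : ℕ} {β α : ℝ} (hβ0 : 0 < β) (hβ1 : β < 1) (hα0 : 0 < α)
    (hd : (d : ℝ) < 2 * α) :
    Integrable fun w : EuclideanSpace ℝ (Fin d) => (mittagLeffler β (-(‖w‖ ^ α))) ^ 2 := by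
  have hG1 : 0 < Gamma (1 + β) := Gamma_pos_of_pos (by linarith)
  set C : ℝ := 2 ^ α * (1 + Gamma (1 + β)) with hC
  have h1 : Integrable fun w : EuclideanSpace ℝ (Fin d) => C ^ 2 * (1 + ‖w‖) ^ (-(2 * α)) := by
    refine (integrable_one_add_norm ?_).const_mul _
    simpa using hd
  refine h1.mono' ?_ (ae_of_all _ fun w => ?_)
  · refine Continuous.aestronglyMeasurable ?_
    exact (((mittagLeffler_continuous hβ0).comp
      ((continuous_norm.rpow_const (fun _ => Or.inr hα0.le)).neg)).pow 2)
  · have hw : 0 ≤ ‖w‖ := norm_nonneg w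
    obtain ⟨b0, b1, b2⟩ := ml_bounds hβ0 hβ1 (x := ‖w‖ ^ α) (by positivity)
    set m := mittagLeffler β (-(‖w‖ ^ α))
    have h2 : (1 + ‖w‖) ^ α ≤ 2 ^ α * (1 + ‖w‖ ^ α) := by
      rcases le_total ‖w‖ 1 with h | h
      · calc (1 + ‖w‖) ^ α ≤ 2 ^ α := rpow_le_rpow (by positivity) (by linarith) hα0.le
          _ ≤ _ := le_mul_of_one_le_right (by positivity) (by
            have : 0 ≤ ‖w‖ ^ α := by positivity
            linarith)
      · calc (1 + ‖w‖) ^ α ≤ (2 * ‖w‖) ^ α := rpow_le_rpow (by positivity) (by linarith) hα0.le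
          _ = 2 ^ α * ‖w‖ ^ α := mul_rpow (by norm_num) hw
          _ ≤ _ := by gcongr; linarith
    have h3 : m * (1 + ‖w‖) ^ α ≤ C := by
      calc m * (1 + ‖w‖) ^ α ≤ m * (2 ^ α * (1 + ‖w‖ ^ α)) := by gcongr
        _ = 2 ^ α * (m + ‖w‖ ^ α * m) := by ring
        _ ≤ C := by rw [hC]; gcongr
    have hp : 0 < (1 + ‖w‖) ^ α := by positivity
    have h4 : m ≤ C * (1 + ‖w‖) ^ (-α) := by
      rw [rpow_neg (by positivity), ← div_eq_mul_inv, le_div_iff₀ hp]; exact h3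
    rw [Real.norm_of_nonneg (by positivity)]
    calc m ^ 2 ≤ (C * (1 + ‖w‖) ^ (-α)) ^ 2 := by gcongr
      _ = C ^ 2 * (1 + ‖w‖) ^ (-(2 * α)) := by
        rw [mul_pow, ← rpow_natCast ((1 + ‖w‖) ^ (-α)), ← rpow_mul (by positivity)]
        congr 2; push_cast; ring

/-- Scaling factor. -/
noncomputable def scl (ν β α s : ℝ) : ℝ := 2 * π * (ν * s ^ β) ^ (1 / α)

lemma scl_pos {ν β α s : ℝ} (hν : 0 < ν) (hs : 0 < s) : 0 < scl ν β α s := by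
  unfold scl; positivity

lemma scl_eq {d : ℕ} {ν β α s : ℝ} (hν : 0 < ν) (hα : 0 < α) (hs : 0 < s)
    (w : EuclideanSpace ℝ (Fin d)) :
    ν * ‖(2 * π) • w‖ ^ α * s ^ β = ‖scl ν β α s • w‖ ^ α := by
  have h1 : 0 ≤ (ν * s ^ β) ^ (1 / α) := by positivity
  rw [norm_smul, norm_smul, Real.norm_of_nonneg (scl_pos hν hs).le, Real.norm_of_nonneg
    (by positivity), scl, mul_right_comm (2 * π), mul_rpow (by positivity) h1,
    ← rpow_mul (by positivity), one_div_mul_cancel hα.ne', rpow_one]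
  ring

lemma scl_int {d : ℕ} {ν β α t : ℝ} (hν : 0 < ν) (hβ0 : 0 < β) (hα : 0 < α) (ht : 0 < t)
    (hd : (d : ℝ) < β⁻¹ * α) :
    IntegrableOn (fun s => (scl ν β α s ^ d)⁻¹) (Ioc 0 t) := by
  have h1 : IntegrableOn (fun s : ℝ => ((2 * π * ν ^ (1 / α)) ^ d)⁻¹ * s ^ (-(β / α * d)))
      (Ioc 0 t) := by
    refine Integrable.const_mul ?_ _
    have := (intervalIntegral.intervalIntegrable_rpow' (a := 0) (b := t)
      (r := -(β / α * d)) ?_)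
    · rwa [intervalIntegrable_iff_integrableOn_Ioc_of_le ht.le] at this
    · have : β / α * d < 1 := by
        calc β / α * d < β / α * (β⁻¹ * α) := by gcongr
          _ = 1 := by field_simp
      linarith
  refine h1.congr_fun (fun s hs => ?_) measurableSet_Ioc
  have hs0 : 0 < s := hs.1
  simp only [scl]
  rw [mul_rpow hν.le (by positivity), ← rpow_mul hs0.le, ← mul_assoc, mul_pow (2 * π * ν ^ (1 / α)),
    mul_inv, rpow_neg hs0.le, ← rpow_natCast (s ^ (β * (1 / α))), ← rpow_mul hs0.le]
  congr 4
  ring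

lemma cos_lower {θ : ℝ} (h : |θ| ≤ π) : 4 / π ^ 2 * θ ^ 2 ≤ 2 - 2 * cos θ := by
  have h2 := Real.cos_le_one_sub_mul_cos_sq h
  have h3 : 4 / π ^ 2 * θ ^ 2 = 2 * (2 / π ^ 2 * θ ^ 2) := by ring
  linarith

theorem spatial_increment_lower_estimate (d : ℕ) (hd : 1 ≤ d) (ν β α : ℝ)
    (hν : 0 < ν) (hβ0 : 0 < β) (hβ1 : β < 1) (hα0 : 0 < α) (hα2 : α ≤ 2)
    (hdα : (d : ℝ) < min 2 β⁻¹ * α)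
    (G : ℝ → EuclideanSpace ℝ (Fin d) → ℝ)
    (hF : ∀ s > (0 : ℝ), ∀ ξ : EuclideanSpace ℝ (Fin d),
      (∫ x, Complex.exp (Complex.I * (⟪ξ, x⟫ : ℝ)) * (G s x : ℂ))
        = (mittagLeffler β (-(ν * ‖ξ‖ ^ α * s ^ β)) : ℂ))
    (t : ℝ) (ht : 0 < t) :
    ∃ c > (0 : ℝ), ∃ δ > (0 : ℝ), ∀ x x' : EuclideanSpace ℝ (Fin d),
      x ≠ x' → ‖x' - x‖ < δ →
      ∫ r in Ioc (0 : ℝ) t, ∫ y, (G (t - r) (x - y) - G (t - r) (x' - y)) ^ 2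
        ≥ c * ‖x' - x‖ ^ 2 := by
  have hd2 : (d : ℝ) < 2 * α := hdα.trans_le (by gcongr; exact min_le_left _ _)
  have hdb : (d : ℝ) < β⁻¹ * α := hdα.trans_le (by gcongr; exact min_le_right _ _)
  have hEc := mittagLeffler_continuous hβ0
  have hE0 : mittagLeffler β 0 = 1 := by
    have h : mlTwo β 1 0 = 1 := by simpa using mlTwo_zero β 1
    exact h
  -- integrability of `G s`
  have hGi : ∀ s > 0, Integrable (G s) := by
    intro s hs
    have h := hF s hs 0
    by_contra hc
    have h1 : ¬ Integrable fun x => (G s x : ℂ) := fun h => hc (by simpa using h.re)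
    rw [norm_zero, zero_rpow hα0.ne'] at h
    simp only [inner_zero_left, Complex.ofReal_zero, mul_zero, Complex.exp_zero, one_mul, zero_mul,
      neg_zero, hE0] at h
    rw [integral_undef h1] at h
    simp at h
  set M : ℝ → EuclideanSpace ℝ (Fin d) → ℝ := fun s w =>
    mittagLeffler β (-(ν * ‖(2 * π) • w‖ ^ α * s ^ β)) with hM
  have hMs : ∀ s > 0, ∀ w, M s w = mittagLeffler β (-(‖scl ν β α s • w‖ ^ α)) := by
    intro s hs w
    simp only [hM]
    rw [scl_eq hν hα0 hs]
  have hMb : ∀ s > 0, ∀ w, 0 ≤ M s w := by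
    intro s hs w
    exact (ml_bounds hβ0 hβ1 (by positivity)).1
  have hML := ml_sq_integrable (d := d) hβ0 hβ1 hα0 hd2
  set K := ∫ w : EuclideanSpace ℝ (Fin d), (mittagLeffler β (-(‖w‖ ^ α))) ^ 2 with hK
  have hMi : ∀ s > 0, Integrable fun w => M s w ^ 2 := by
    intro s hs
    simp_rw [hMs s hs]
    exact hML.comp_smul (scl_pos hν hs).ne'
  have hMI : ∀ s > 0, ∫ w, M s w ^ 2 = (scl ν β α s ^ d)⁻¹ * K := by
    intro s hs
    simp_rw [hMs s hs]
    have := Measure.integral_comp_smul_of_nonneg volume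
      (fun w : EuclideanSpace ℝ (Fin d) => (mittagLeffler β (-(‖w‖ ^ α))) ^ 2)
      (scl ν β α s) (hR := (scl_pos hν hs).le)
    simpa using this
  -- lower bound radius
  obtain ⟨η, hη, hEη⟩ : ∃ η > 0, ∀ y, 0 ≤ y → y < η → 1 / 2 < mittagLeffler β (-y) := by
    have h := hEc.tendsto 0
    rw [hE0] at h
    obtain ⟨η, hη, H⟩ := Metric.eventually_nhds_iff.1
      (h.eventually (lt_mem_nhds (show (1/2 : ℝ) < 1 by norm_num)))
    refine ⟨η, hη, fun y h1 h2 => H ?_⟩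
    rw [dist_zero_right, norm_neg, norm_of_nonneg h1]; exact h2
  obtain ⟨ρ, hρ, hρη⟩ : ∃ ρ > 0, ν * (2 * π * ρ) ^ α * t ^ β < η := by
    have h : Continuous fun ρ : ℝ => ν * (2 * π * ρ) ^ α * t ^ β := by
      have := continuous_rpow_const hα0.le
      fun_prop
    have h0 := h.tendsto 0
    simp only [mul_zero, zero_rpow hα0.ne', zero_mul] at h0
    obtain ⟨r, hr, H⟩ := Metric.eventually_nhds_iff.1 (h0.eventually (gt_mem_nhds hη))
    refine ⟨r / 2, by positivity, H ?_⟩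
    rw [dist_zero_right, norm_of_nonneg (by positivity)]; linarith
  have hMlow : ∀ s, 0 < s → s ≤ t → ∀ w, ‖w‖ ≤ ρ → 1 / 2 ≤ M s w := by
    intro s hs hst w hw
    refine (hEη _ (by positivity) (lt_of_le_of_lt ?_ hρη)).le
    rw [norm_smul, Real.norm_of_nonneg (by positivity)]
    gcongr
  set Vol := volume.real (Metric.ball (0 : EuclideanSpace ℝ (Fin d)) (ρ / 4)) with hVol
  have hVp : 0 < Vol := by
    rw [hVol, measureReal_def]
    exact ENNReal.toReal_pos (Metric.measure_ball_pos _ _ (by positivity)).ne'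
      measure_ball_lt_top.ne
  refine ⟨t * (ρ ^ 2 * Vol), by positivity, 1 / (2 * ρ), by positivity, ?_⟩
  intro x x' hne hlt
  set z := x' - x with hz
  have hz0 : 0 < ‖z‖ := norm_pos_iff.2 (sub_ne_zero.2 hne.symm)
  set P : EuclideanSpace ℝ (Fin d) → ℝ := fun w => 2 - 2 * cos (2 * π * ⟪w, z⟫) with hP
  have hP0 : ∀ w, 0 ≤ P w := fun w => by
    have := cos_le_one (2 * π * ⟪w, z⟫); simp only [hP]; linarith
  have hP4 : ∀ w, P w ≤ 4 := fun w => by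
    have := neg_one_le_cos (2 * π * ⟪w, z⟫); simp only [hP]; linarith
  have hPc : Continuous P := by simp only [hP]; fun_prop
  set J : ℝ → ℝ := fun s => ∫ w, P w * M s w ^ 2 with hJ
  have hPMi : ∀ s > 0, Integrable fun w => P w * M s w ^ 2 := by
    intro s hs
    refine Integrable.bdd_mul (c := 4) (hMi s hs) hPc.aestronglyMeasurable (ae_of_all _ fun w => ?_)
    rw [Real.norm_of_nonneg (hP0 w)]; exact hP4 w
  have hAJ : ∀ s > 0, ∫ y, (G s (x - y) - G s (x' - y)) ^ 2 = J s := by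
    intro s hs
    refine increment_eq (hGi s hs) (m := fun ξ => mittagLeffler β (-(ν * ‖ξ‖ ^ α * s ^ β)))
      ?_ (hF s hs) (hMi s hs) x x'
    have : Continuous fun ξ : EuclideanSpace ℝ (Fin d) => ‖ξ‖ ^ α :=
      continuous_norm.rpow_const (fun _ => Or.inr hα0.le)
    exact hEc.comp (by fun_prop)
  -- lower bound for J
  have hJlow : ∀ s ∈ Ioc 0 t, ρ ^ 2 * Vol * ‖z‖ ^ 2 ≤ J s := by
    intro s hs
    set w0 : EuclideanSpace ℝ (Fin d) := (3 / 4 * ρ / ‖z‖) • z with hw0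
    have hw0n : ‖w0‖ = 3 / 4 * ρ := by
      rw [hw0, norm_smul, Real.norm_of_nonneg (by positivity)]; field_simp
    have hw0i : ⟪w0, z⟫ = 3 / 4 * ρ * ‖z‖ := by
      rw [hw0, inner_smul_left, real_inner_self_eq_norm_sq]
      simp only [conj_trivial]; field_simp
    have hball : volume.real (Metric.ball w0 (ρ / 4)) = Vol := by
      rw [hVol, measureReal_def, measureReal_def, Measure.addHaar_ball_center]
    calc ρ ^ 2 * Vol * ‖z‖ ^ 2
        = ∫ w in Metric.ball w0 (ρ / 4), ρ ^ 2 * ‖z‖ ^ 2 := by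
          rw [setIntegral_const, hball, smul_eq_mul]; ring
      _ ≤ ∫ w in Metric.ball w0 (ρ / 4), P w * M s w ^ 2 := by
          refine setIntegral_mono_on (integrableOn_const measure_ball_lt_top.ne)
            (hPMi s hs.1).integrableOn measurableSet_ball ?_
          intro w hw
          rw [mem_ball_iff_norm] at hw
          have hwn : ‖w‖ ≤ ρ := by
            have : ‖w‖ ≤ ‖w - w0‖ + ‖w0‖ := by simpa using norm_add_le (w - w0) w0
            linarith
          have hmm := hMlow s hs.1 hs.2 w hwn
          have hin : 1 / 2 * ρ * ‖z‖ ≤ ⟪w, z⟫ := by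
            have h1 : ⟪w, z⟫ = ⟪w - w0, z⟫ + ⟪w0, z⟫ := by rw [inner_sub_left]; ring
            have h2 := (abs_le.1 (abs_real_inner_le_norm (w - w0) z)).1
            have h3 : ‖w - w0‖ * ‖z‖ ≤ ρ / 4 * ‖z‖ := by gcongr
            rw [h1, hw0i]; linarith
          have hin2 : ⟪w, z⟫ ≤ 1 / 2 := by
            have h2 := (abs_le.1 (abs_real_inner_le_norm w z)).2
            have h3 : ‖w‖ * ‖z‖ ≤ ρ * (1 / (2 * ρ)) := by gcongr
            have h4 : ρ * (1 / (2 * ρ)) = 1 / 2 := by field_simp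
            linarith
          have hin0 : 0 ≤ ⟪w, z⟫ := le_trans (by positivity) hin
          have hc := cos_lower (θ := 2 * π * ⟪w, z⟫) (by
            rw [abs_of_nonneg (by positivity)]
            nlinarith [pi_pos])
          have hc2 : 4 / π ^ 2 * (2 * π * ⟪w, z⟫) ^ 2 = 16 * ⟪w, z⟫ ^ 2 := by
            field_simp; ring
          rw [hc2] at hc
          have hPl : 4 * (ρ ^ 2 * ‖z‖ ^ 2) ≤ P w := by
            refine le_trans ?_ hc
            have : (1 / 2 * ρ * ‖z‖) ^ 2 ≤ ⟪w, z⟫ ^ 2 := by gcongr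
            nlinarith
          have hM4 : 1 / 4 ≤ M s w ^ 2 := by nlinarith
          calc ρ ^ 2 * ‖z‖ ^ 2 = (4 * (ρ ^ 2 * ‖z‖ ^ 2)) * (1 / 4) := by ring
            _ ≤ P w * M s w ^ 2 := by
              have := hP0 w
              gcongr
      _ ≤ J s := by
          refine setIntegral_le_integral (hPMi s hs.1) (ae_of_all _ fun w => ?_)
          exact mul_nonneg (hP0 w) (sq_nonneg _)
  -- integrability of J
  have hJi : IntegrableOn J (Ioc 0 t) := by
    have hb : IntegrableOn (fun s => 4 * ((scl ν β α s ^ d)⁻¹ * K)) (Ioc 0 t) :=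
      ((scl_int hν hβ0 hα0 ht hdb).mul_const K).const_mul 4
    refine Integrable.mono' hb ?_ ?_
    · have hcont : Continuous fun p : ℝ × EuclideanSpace ℝ (Fin d) => P p.2 * M p.1 p.2 ^ 2 := by
        have h1 : Continuous fun p : ℝ × EuclideanSpace ℝ (Fin d) => ‖(2 * π) • p.2‖ ^ α :=
          (Continuous.norm (by fun_prop)).rpow_const (fun _ => Or.inr hα0.le)
        have h2 : Continuous fun p : ℝ × EuclideanSpace ℝ (Fin d) => p.1 ^ β :=
          continuous_fst.rpow_const (fun _ => Or.inr hβ0.le)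
        have h3 : Continuous fun p : ℝ × EuclideanSpace ℝ (Fin d) => M p.1 p.2 :=
          hEc.comp (by fun_prop)
        fun_prop
      exact (StronglyMeasurable.integral_prod_right' (ν := volume)
        hcont.stronglyMeasurable).aestronglyMeasurable
    · refine (ae_restrict_iff' measurableSet_Ioc).2 (ae_of_all _ fun s hs => ?_)
      have h0 : 0 ≤ J s := integral_nonneg fun w => mul_nonneg (hP0 w) (sq_nonneg _)
      rw [Real.norm_of_nonneg h0, ← hMI s hs.1, ← integral_const_mul]
      refine integral_mono (hPMi s hs.1) ((hMi s hs.1).const_mul 4) fun w => ?_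
      exact mul_le_mul_of_nonneg_right (hP4 w) (sq_nonneg _)
  have hchange : ∫ r in Ioc (0 : ℝ) t, ∫ y, (G (t - r) (x - y) - G (t - r) (x' - y)) ^ 2
      = ∫ s in Ioc 0 t, J s := by
    rw [← intervalIntegral.integral_of_le ht.le,
      intervalIntegral.integral_comp_sub_left
        (fun s => ∫ y, (G s (x - y) - G s (x' - y)) ^ 2) t, sub_self, sub_zero,
      intervalIntegral.integral_of_le ht.le]
    exact setIntegral_congr_fun measurableSet_Ioc fun s hs => hAJ s hs.1
  rw [hchange, ge_iff_le]
  calc t * (ρ ^ 2 * Vol) * ‖z‖ ^ 2 = ∫ s in Ioc 0 t, ρ ^ 2 * Vol * ‖z‖ ^ 2 := by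
        rw [setIntegral_const, Real.volume_real_Ioc_of_le ht.le, smul_eq_mul]; ring
    _ ≤ _ := setIntegral_mono_on (integrableOn_const (by simp)) hJi measurableSet_Ioc hJlow
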